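/- Let 0<s<1 and let Ω satisfy (H) with Ω̃(φ)≥c for all φ, for some constant c>0. Then: (i) there exists a unique pair (a_∞,b_∞)∈(0,∞)² with A(a_∞,b_∞)=B(a_∞,b_∞)=1; (ii) for every C¹ solution (a,b):[0,∞)→(0,∞)² of the ODE system a'(t)=2·(A(a(t),b(t))−1)·a(t), b'(t)=2·(B(a(t),b(t))−1)·b(t), there exist constants C,λ>0 such that ℰ(a(t),b(t))−ℰ(a_∞,b_∞) ≤ C·e^{−λt} for all t≥0, and (a(t),b(t))→(a_∞,b_∞) as t→∞. -/

import Mathlib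

/-!
Write `σ = s / 2` and pass to the variables `u = a²`, `v = b²`. Then `ℰ` becomes
`E(u, v) = ∫ (u p + v (1 - p)) ^ (-σ) dμ + σ (u + v)` with `p = cos²` and
`dμ = K Ω̃(φ) dφ`, `K > 0`; its partial derivatives are `σ (1 - A)` and `σ (1 - B)`, and the system
becomes `u' = 4 (A - 1) u`, `v' = 4 (B - 1) v`, a gradient flow of `E` for a position-dependent
metric. Three facts about `E` drive the proof.

* `E` is strongly convex on bounded parts of the quadrant (`Weight.En_lower`). The scalar inequality
  is the uniform convexity of `r ↦ r ^ (-σ)` on `(0, R]`; after integration it leaves the quadratic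
  form `∫ (α p + β (1 - p))² dμ`, which is positive definite since `Ω̃ ≥ c` makes `μ` charge
  neighbourhoods of both axes. Together with the matching upper bound `Weight.En_upper` this also
  yields differentiability.
* `E ≥ σ (u + v)`, so sublevel sets are bounded (`Weight.le_En`).
* `A → ∞` as `u → 0` for bounded `v`, and symmetrically for `B` (`Weight.one_lt_GA`,
  `Weight.one_lt_GB`).

The last two facts keep the minimizer of `E` over a large square off its boundary, which gives a
critical point, and the first makes it unique. Along a trajectory `E` decreases, so `u` and `v` stay
bounded, and the blow-up of `A` and `B` keeps them away from `0`. On the resulting compact square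
strong convexity gives a Polyak–Łojasiewicz inequality, hence exponential decay of the energy gap,
and the gap dominates the squared distance to the critical point (`Weight.flow`).

That `μ` is a finite measure follows from the continuity of `Ω̃` (`Omt_continuous`): periodicity
moves the singularity of the kernel to fixed points, and smoothness and `π`-periodicity of `Ω` bound
its increments by a multiple of `|sin|`.
-/

open MeasureTheory Real Filter Set Topology
open scoped ENNReal

noncomputable section

namespace Aniso

/-- The Euclidean norm on `ℝ × ℝ`. -/
def nrm (x : ℝ × ℝ) : ℝ := Real.sqrt (x.1 ^ 2 + x.2 ^ 2)

/-- The angle `θ(x) ∈ [-π, π)` of a nonzero point `x ∈ ℝ²`,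
so that `x / |x| = (cos (ang x), sin (ang x))`. -/
def ang (x : ℝ × ℝ) : ℝ :=
  if Complex.arg ⟨x.1, x.2⟩ = π then -π else Complex.arg ⟨x.1, x.2⟩

/-- The unit vector `e_φ = (cos φ, sin φ)`. -/
def eVec (φ : ℝ) : ℝ × ℝ := (Real.cos φ, Real.sin φ)

/-- The constant `τ_s = (2π)^{-s} Γ(s) cos(sπ/2)`. -/
def tauC (s : ℝ) : ℝ := (2 * π) ^ (-s) * Real.Gamma s * Real.cos (s * π / 2)

/-- The constant `c_s = π^{s-1} Γ((2-s)/2) / Γ(s/2)`. -/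
def cC (s : ℝ) : ℝ := π ^ (s - 1) * Real.Gamma ((2 - s) / 2) / Real.Gamma (s / 2)

/-- Hypothesis (H): `Ω` is smooth, 2π-periodic, strictly positive and π-periodic. -/
def SatisfiesH (Ω : ℝ → ℝ) : Prop :=
  ContDiff ℝ (⊤ : ℕ∞) Ω ∧ (∀ θ, Ω (θ + 2 * π) = Ω θ) ∧ (∀ θ, 0 < Ω θ) ∧ ∀ θ, Ω (θ + π) = Ω θ

/-- Hypothesis (h): `ω` is smooth, 2π-periodic, nonnegative, not identically zero,
π-periodic, and `ω(π/2) = 0`. -/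
def Satisfiesh (ω : ℝ → ℝ) : Prop :=
  ContDiff ℝ (⊤ : ℕ∞) ω ∧ (∀ θ, ω (θ + 2 * π) = ω θ) ∧ (∀ θ, 0 ≤ ω θ) ∧ (∃ θ, ω θ ≠ 0) ∧
    (∀ θ, ω (θ + π) = ω θ) ∧ ω (π / 2) = 0

/-- The transformed angle function `Ω̃`. -/
def Omt (s : ℝ) (Ω : ℝ → ℝ) (φ : ℝ) : ℝ :=
  tauC (2 - s) * (∫ θ in (-π)..π, |Real.cos (φ - θ)| ^ (-2 + s) * (Ω θ - Ω (φ + π / 2)))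
    + cC s * Ω (φ + π / 2)

/-- The interaction potential `W(x) = |x|^{-s} Ω(θ(x)) + |x|²` as an `[0,∞]`-valued
kernel, with `W(0) = ∞`. -/
def Wkernel (s : ℝ) (Ω : ℝ → ℝ) (x : ℝ × ℝ) : ℝ≥0∞ :=
  if x = 0 then ⊤ else ENNReal.ofReal (nrm x ^ (-s) * Ω (ang x) + nrm x ^ 2)

/-- The interaction energy `E[ρ] = (1/2) ∬ W(x-y) dρ(y) dρ(x) ∈ [0,∞]`. -/
def energy (s : ℝ) (Ω : ℝ → ℝ) (ρ : Measure (ℝ × ℝ)) : ℝ≥0∞ :=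
  (1 / 2 : ℝ≥0∞) * ∫⁻ x, ∫⁻ y, Wkernel s Ω (x - y) ∂ρ ∂ρ

/-- The real-valued interaction potential (with junk value `0` at the origin,
which is Lebesgue negligible). -/
def Wr (s : ℝ) (Ω : ℝ → ℝ) (x : ℝ × ℝ) : ℝ := nrm x ^ (-s) * Ω (ang x) + nrm x ^ 2

/-- `ρ` minimizes the energy `E` among probability measures on `ℝ²`. -/
def IsMinimizer (E : Measure (ℝ × ℝ) → ℝ≥0∞) (ρ : Measure (ℝ × ℝ)) : Prop :=
  IsProbabilityMeasure ρ ∧ ∀ μ : Measure (ℝ × ℝ), IsProbabilityMeasure μ → E ρ ≤ E μ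

/-- `ρ` is the unique minimizer of `E` up to translation: it is a minimizer and every
minimizer is a translate of it. -/
def IsUniqueMinimizer (E : Measure (ℝ × ℝ) → ℝ≥0∞) (ρ : Measure (ℝ × ℝ)) : Prop :=
  IsMinimizer E ρ ∧ ∀ μ, IsMinimizer E μ → ∃ v : ℝ × ℝ, μ = Measure.map (fun x => x + v) ρ

def R2 (s : ℝ) : ℝ := (8 * Real.sin (s * π / 2) / (s ^ 2 * (2 + s) * π)) ^ (-(1 / (s + 2)))

def C2 (s : ℝ) : ℝ := 4 * Real.sin (s * π / 2) / (s ^ 2 * π ^ 2)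

/-- The density `ρ₂(x) = C₂ (R₂² - |x|²)₊^{s/2}`. -/
def rho2 (s : ℝ) (x : ℝ × ℝ) : ℝ := C2 s * (max (R2 s ^ 2 - nrm x ^ 2) 0) ^ (s / 2)

def rho2meas (s : ℝ) : Measure (ℝ × ℝ) := volume.withDensity fun x => ENNReal.ofReal (rho2 s x)

/-- Counterclockwise rotation of `ℝ²` by the angle `η`. -/
def Rot (η : ℝ) (x : ℝ × ℝ) : ℝ × ℝ :=
  (x.1 * Real.cos η - x.2 * Real.sin η, x.1 * Real.sin η + x.2 * Real.cos η)

/-- The measure `ρ_{a,b,η}`: the pushforward of `ρ₂(x) dx` under `x ↦ R_η (a x₁, b x₂)`. -/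
def rhoE (s a b η : ℝ) : Measure (ℝ × ℝ) :=
  Measure.map (fun x => Rot η (a * x.1, b * x.2)) (rho2meas s)

/-- The measure `ρ_{a,b} = ρ_{a,b,0}`. -/
def rhoAB (s a b : ℝ) : Measure (ℝ × ℝ) := rhoE s a b 0

/-- The Beta function. -/
def BetaR (x y : ℝ) : ℝ := Real.Gamma x * Real.Gamma y / Real.Gamma (x + y)

def C1 (s : ℝ) : ℝ := 2 * Real.cos (s * π / 2) / (s * (s + 1) * π)

def R1 (s : ℝ) : ℝ := (C1 s * BetaR (1 / 2) ((3 + s) / 2)) ^ (-(1 / (s + 2)))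

/-- The density `ρ₁(t) = C₁ (R₁² - t²)₊^{(1+s)/2}` on `ℝ`. -/
def rho1 (s t : ℝ) : ℝ := C1 s * (max (R1 s ^ 2 - t ^ 2) 0) ^ ((1 + s) / 2)

def rho1meas (s : ℝ) : Measure ℝ := volume.withDensity fun t => ENNReal.ofReal (rho1 s t)

/-- The measure `ρ_{1D}`: the pushforward of `ρ₁(t) dt` under `t ↦ (0, t)`. -/
def rho1D (s : ℝ) : Measure (ℝ × ℝ) := Measure.map (fun t : ℝ => ((0 : ℝ), t)) (rho1meas s)

/-- The support of a measure: points all of whose neighborhoods have positive measure. -/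
def msupport {α : Type*} [TopologicalSpace α] [MeasurableSpace α] (μ : Measure α) : Set α :=
  {x | ∀ U ∈ 𝓝 x, 0 < μ U}

def Acoef (s : ℝ) (Ω : ℝ → ℝ) (a b : ℝ) : ℝ :=
  tauC s * (R1 s / R2 s) ^ (2 + s) *
    ∫ φ in (-π)..π,
      (a ^ 2 * Real.cos φ ^ 2 + b ^ 2 * Real.sin φ ^ 2) ^ (-(2 + s) / 2) *
        Real.cos φ ^ 2 * Omt s Ω φ

def Bcoef (s : ℝ) (Ω : ℝ → ℝ) (a b : ℝ) : ℝ :=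
  tauC s * (R1 s / R2 s) ^ (2 + s) *
    ∫ φ in (-π)..π,
      (a ^ 2 * Real.cos φ ^ 2 + b ^ 2 * Real.sin φ ^ 2) ^ (-(2 + s) / 2) *
        Real.sin φ ^ 2 * Omt s Ω φ

def Dcoef (s : ℝ) (Ω : ℝ → ℝ) (a b : ℝ) : ℝ :=
  tauC s * (R1 s / R2 s) ^ (2 + s) *
    ∫ φ in (-π)..π,
      (a ^ 2 * Real.cos φ ^ 2 + b ^ 2 * Real.sin φ ^ 2) ^ (-(2 + s) / 2) *
        (Real.cos φ * Real.sin φ) * Omt s Ω φ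

def Mfun (s : ℝ) (Ω : ℝ → ℝ) (a b : ℝ) : ℝ :=
  tauC s * (R1 s / R2 s) ^ (2 + s) *
    ∫ φ in (-π)..π, (a ^ 2 * Real.cos φ ^ 2 + b ^ 2 * Real.sin φ ^ 2) ^ (-s / 2) * Omt s Ω φ

def calE (s : ℝ) (Ω : ℝ → ℝ) (a b : ℝ) : ℝ := Mfun s Ω a b + s / 2 * (a ^ 2 + b ^ 2)

/-- A measure has compact support. -/
def HasCompactSupportM (ρ : Measure (ℝ × ℝ)) : Prop :=
  ∃ K : Set (ℝ × ℝ), IsCompact K ∧ ρ Kᶜ = 0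

/-- The linear interpolation `(1-t) ρ₀ + t ρ₁`. -/
def mix (ρ₀ ρ₁ : Measure (ℝ × ℝ)) (t : ℝ) : Measure (ℝ × ℝ) :=
  ENNReal.ofReal (1 - t) • ρ₀ + ENNReal.ofReal t • ρ₁

/-- Linear interpolation convexity (LIC): for any two distinct compactly supported
probability measures of finite energy with the same center of mass, the energy is
strictly convex along their linear interpolation. -/
def LIC (s : ℝ) (Ω : ℝ → ℝ) : Prop :=
  ∀ ρ₀ ρ₁ : Measure (ℝ × ℝ), IsProbabilityMeasure ρ₀ → IsProbabilityMeasure ρ₁ →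
    HasCompactSupportM ρ₀ → HasCompactSupportM ρ₁ →
    energy s Ω ρ₀ < ⊤ → energy s Ω ρ₁ < ⊤ → ρ₀ ≠ ρ₁ →
    (∫ x, x ∂ρ₀) = (∫ x, x ∂ρ₁) →
    StrictConvexOn ℝ (Set.Icc (0 : ℝ) 1) fun t => (energy s Ω (mix ρ₀ ρ₁ t)).toReal

/-- The interaction energy of a bounded compactly supported signed density. -/
def energyR (s : ℝ) (Ω : ℝ → ℝ) (μ : ℝ × ℝ → ℝ) : ℝ :=
  (1 / 2) * ∫ x : ℝ × ℝ, (∫ y : ℝ × ℝ, Wr s Ω (x - y) * μ y) * μ x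

/-- The logarithmic potential `W_log(x) = -ln|x| + Ω(θ(x)) + |x|²` (real valued,
with junk value at the origin). -/
def Wlog (Ω : ℝ → ℝ) (x : ℝ × ℝ) : ℝ := -Real.log (nrm x) + Ω (ang x) + nrm x ^ 2

def WlogKernel (Ω : ℝ → ℝ) (x : ℝ × ℝ) : ℝ≥0∞ :=
  if x = 0 then ⊤ else ENNReal.ofReal (Wlog Ω x)

/-- The logarithmic interaction energy. -/
def energyLog (Ω : ℝ → ℝ) (ρ : Measure (ℝ × ℝ)) : ℝ≥0∞ :=
  (1 / 2 : ℝ≥0∞) * ∫⁻ x, ∫⁻ y, WlogKernel Ω (x - y) ∂ρ ∂ρ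

/-- The family `W_{(s)}(x) = |x|^{-s} (1/s + Ω(θ(x))) - 1/s + |x|²`. -/
def Wsfam (s : ℝ) (Ω : ℝ → ℝ) (x : ℝ × ℝ) : ℝ :=
  nrm x ^ (-s) * (1 / s + Ω (ang x)) - 1 / s + nrm x ^ 2

/-- The transformed angle function of `W_{(s)}`. -/
def Omts (s : ℝ) (Ω : ℝ → ℝ) (φ : ℝ) : ℝ :=
  tauC (2 - s) * (∫ θ in (-π)..π, |Real.cos (φ - θ)| ^ (-2 + s) * (Ω θ - Ω (φ + π / 2)))
    + cC s * (1 / s + Ω (φ + π / 2))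

/-- The truncated integral appearing in the principal value defining `Ω̃_log`. -/
def pvInt (Ω : ℝ → ℝ) (φ δ : ℝ) : ℝ :=
  ∫ θ in {θ : ℝ | θ ∈ Set.Icc (-π) π ∧ δ ≤ |Real.cos (φ - θ)|},
    |Real.cos (φ - θ)| ^ (-(2 : ℝ)) * (Ω θ - Ω (φ + π / 2))

def OmtLogFam (Ω : ℝ → ℝ) (φ δ : ℝ) : ℝ :=
  -((2 * π) ^ (-(2 : ℝ))) * pvInt Ω φ δ + (2 * π)⁻¹

/-- The transformed angle function `Ω̃_log`, defined as the principal value limit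
(via `limUnder`, which returns the limit whenever it exists). -/
def OmtLog (Ω : ℝ → ℝ) (φ : ℝ) : ℝ := limUnder (𝓝[>] (0 : ℝ)) (OmtLogFam Ω φ)

/-- The closed elliptical region `B(0; a, b)`. -/
def ellipseSet (a b : ℝ) : Set (ℝ × ℝ) := {x | x.1 ^ 2 / a ^ 2 + x.2 ^ 2 / b ^ 2 ≤ 1}

def ALog (Ω : ℝ → ℝ) (a b : ℝ) : ℝ :=
  ∫ φ in (-π)..π,
    (a ^ 2 * Real.cos φ ^ 2 + b ^ 2 * Real.sin φ ^ 2)⁻¹ * Real.cos φ ^ 2 * OmtLog Ω φ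

def BLog (Ω : ℝ → ℝ) (a b : ℝ) : ℝ :=
  ∫ φ in (-π)..π,
    (a ^ 2 * Real.cos φ ^ 2 + b ^ 2 * Real.sin φ ^ 2)⁻¹ * Real.sin φ ^ 2 * OmtLog Ω φ

def DLog (Ω : ℝ → ℝ) (a b : ℝ) : ℝ :=
  ∫ φ in (-π)..π,
    (a ^ 2 * Real.cos φ ^ 2 + b ^ 2 * Real.sin φ ^ 2)⁻¹ *
      (Real.cos φ * Real.sin φ) * OmtLog Ω φ

/-- The uniform probability measure on the rotated ellipse `B(0; a, b, η)`. -/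
def unifEllipse (a b η : ℝ) : Measure (ℝ × ℝ) :=
  volume.withDensity ((Rot η '' ellipseSet a b).indicator fun _ => ENNReal.ofReal ((π * a * b)⁻¹))

/-- The pushforward of the density `(2/(πb²)) (b² - t²)₊^{1/2} dt` under `t ↦ R_η (0, t)`. -/
def semicirc (b η : ℝ) : Measure (ℝ × ℝ) :=
  Measure.map (fun t : ℝ => Rot η (0, t))
    (volume.withDensity fun t =>
      ENNReal.ofReal (2 / (π * b ^ 2) * (max (b ^ 2 - t ^ 2) 0) ^ ((1 : ℝ) / 2)))

/-- The vertical semicircle measure `ρ_{1D}` for the logarithmic case. -/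
def rho1Dlog : Measure (ℝ × ℝ) :=
  Measure.map (fun t : ℝ => ((0 : ℝ), t))
    (volume.withDensity fun t => ENNReal.ofReal (2 / π * (max (1 - t ^ 2) 0) ^ ((1 : ℝ) / 2)))

/-- The measure `ψ(t) dt` placed on the vertical axis. -/
def rhoPsi (ψ : ℝ → ℝ) : Measure (ℝ × ℝ) :=
  Measure.map (fun t : ℝ => ((0 : ℝ), t)) (volume.withDensity fun t => ENNReal.ofReal (ψ t))

/-! ### Second-order comparison for negative powers -/

/-- The mean value theorem for two points in arbitrary order. -/
lemma mvt_uIcc {f f' : ℝ → ℝ} {a b : ℝ} (hf : ∀ x ∈ uIcc a b, HasDerivAt f (f' x) x) :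
    ∃ ξ ∈ uIcc a b, f b - f a = f' ξ * (b - a) := by
  rcases lt_trichotomy a b with h | h | h
  · rw [uIcc_of_le h.le] at hf ⊢
    obtain ⟨ξ, hξ, h1⟩ := exists_hasDerivAt_eq_slope f f' h
      (fun x hx => (hf x hx).continuousAt.continuousWithinAt)
      (fun x hx => hf x (Ioo_subset_Icc_self hx))
    refine ⟨ξ, Ioo_subset_Icc_self hξ, ?_⟩
    rw [h1]
    field_simp [sub_ne_zero.2 h.ne']
  · subst h
    exact ⟨a, by simp, by simp⟩
  · rw [uIcc_of_ge h.le] at hf ⊢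
    obtain ⟨ξ, hξ, h1⟩ := exists_hasDerivAt_eq_slope f f' h
      (fun x hx => (hf x hx).continuousAt.continuousWithinAt)
      (fun x hx => hf x (Ioo_subset_Icc_self hx))
    refine ⟨ξ, Ioo_subset_Icc_self hξ, ?_⟩
    rw [h1]
    field_simp [sub_ne_zero.2 h.ne']
    ring

/-- Second-order comparison: the defect between `f` and the parabola
`f a + f' a (x - a) + κ (x - a)²` at `b` has the sign of `f'' - 2κ` at an intermediate point. -/
lemma taylor_sign {f f' f'' : ℝ → ℝ} {a b : ℝ} (κ : ℝ)
    (hf : ∀ x ∈ uIcc a b, HasDerivAt f (f' x) x)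
    (hf' : ∀ x ∈ uIcc a b, HasDerivAt f' (f'' x) x) :
    ∃ η ∈ uIcc a b, ∃ θ : ℝ, 0 ≤ θ ∧
      f b - f a - f' a * (b - a) - κ * (b - a) ^ 2 = (f'' η - 2 * κ) * θ := by
  obtain ⟨ξ, hξ, h1⟩ := mvt_uIcc (a := a) (b := b)
    (f := fun x => f x - f' a * (x - a) - κ * (x - a) ^ 2)
    (f' := fun x => f' x - f' a - 2 * κ * (x - a)) (fun x hx => by
      have h := ((hf x hx).sub (((hasDerivAt_id x).sub_const a).const_mul (f' a))).sub
        ((((hasDerivAt_id x).sub_const a).pow 2).const_mul κ)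
      refine h.congr_deriv ?_
      simp
      ring)
  have hsub : uIcc a ξ ⊆ uIcc a b := uIcc_subset_uIcc_left hξ
  obtain ⟨η, hη, h2⟩ := mvt_uIcc (fun x hx => hf' x (hsub hx))
  refine ⟨η, hsub hη, (ξ - a) * (b - a), ?_, ?_⟩
  · rcases le_total a b with h | h
    · rw [uIcc_of_le h] at hξ
      exact mul_nonneg (by linarith [hξ.1]) (by linarith)
    · rw [uIcc_of_ge h] at hξ
      exact mul_nonneg_of_nonpos_of_nonpos (by linarith [hξ.2]) (by linarith)
  · simp only [sub_self, mul_zero] at h1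
    have : f' ξ - f' a - 2 * κ * (ξ - a) = (f'' η - 2 * κ) * (ξ - a) := by rw [h2]; ring
    rw [this] at h1
    linear_combination h1

lemma rpow_taylor {σ : ℝ} (κ : ℝ) {x y : ℝ} (hx : 0 < x) (hy : 0 < y) :
    ∃ η ∈ uIcc x y, ∃ θ : ℝ, 0 ≤ θ ∧
      y ^ (-σ) - x ^ (-σ) + σ * x ^ (-σ - 1) * (y - x) - κ * (y - x) ^ 2
        = (σ * (σ + 1) * η ^ (-σ - 2) - 2 * κ) * θ := by
  have hpos : ∀ z ∈ uIcc x y, z ≠ 0 := fun z hz => (lt_of_lt_of_le (lt_min hx hy) hz.1).ne'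
  obtain ⟨η, hη, θ, h0, h1⟩ := taylor_sign (a := x) (b := y) (f := fun r => r ^ (-σ))
    (f' := fun r => -σ * r ^ (-σ - 1)) (f'' := fun r => -σ * ((-σ - 1) * r ^ (-σ - 1 - 1))) κ
    (fun z hz => Real.hasDerivAt_rpow_const (Or.inl (hpos z hz)))
    (fun z hz => (Real.hasDerivAt_rpow_const (Or.inl (hpos z hz))).const_mul _)
  refine ⟨η, hη, θ, h0, ?_⟩
  rw [show -σ - 1 - 1 = -σ - 2 by ring] at h1
  linear_combination h1

/-- Uniform convexity of `r ↦ r ^ (-σ)` on `(0, R]`. -/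
lemma rpow_lower {σ R x y : ℝ} (hσ : 0 < σ) (hx : 0 < x) (hy : 0 < y) (hxR : x ≤ R)
    (hyR : y ≤ R) :
    x ^ (-σ) - σ * x ^ (-σ - 1) * (y - x) + σ * (σ + 1) / 2 * R ^ (-σ - 2) * (y - x) ^ 2
      ≤ y ^ (-σ) := by
  obtain ⟨η, hη, θ, h0, h1⟩ := rpow_taylor (σ := σ) (σ * (σ + 1) / 2 * R ^ (-σ - 2)) hx hy
  have hη0 : 0 < η := lt_of_lt_of_le (lt_min hx hy) hη.1
  have hηR : η ≤ R := hη.2.trans (max_le hxR hyR)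
  have h2 : R ^ (-σ - 2) ≤ η ^ (-σ - 2) := Real.rpow_le_rpow_of_nonpos hη0 hηR (by linarith)
  have h3 : 0 ≤ (σ * (σ + 1) * η ^ (-σ - 2) - 2 * (σ * (σ + 1) / 2 * R ^ (-σ - 2))) * θ := by
    refine mul_nonneg ?_ h0
    have : 0 ≤ σ * (σ + 1) * (η ^ (-σ - 2) - R ^ (-σ - 2)) :=
      mul_nonneg (by positivity) (by linarith)
    linarith
  linarith

/-- Quadratic upper bound for `r ↦ r ^ (-σ)` on `[δ, ∞)`. -/
lemma rpow_upper {σ δ x y : ℝ} (hσ : 0 < σ) (hδ : 0 < δ) (hx : δ ≤ x) (hy : δ ≤ y) :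
    y ^ (-σ) ≤ x ^ (-σ) - σ * x ^ (-σ - 1) * (y - x)
      + σ * (σ + 1) / 2 * δ ^ (-σ - 2) * (y - x) ^ 2 := by
  obtain ⟨η, hη, θ, h0, h1⟩ := rpow_taylor (σ := σ) (σ * (σ + 1) / 2 * δ ^ (-σ - 2))
    (hδ.trans_le hx) (hδ.trans_le hy)
  have hηδ : δ ≤ η := (le_min hx hy).trans hη.1
  have h2 : η ^ (-σ - 2) ≤ δ ^ (-σ - 2) := Real.rpow_le_rpow_of_nonpos hδ hηδ (by linarith)
  have h3 : (σ * (σ + 1) * η ^ (-σ - 2) - 2 * (σ * (σ + 1) / 2 * δ ^ (-σ - 2))) * θ ≤ 0 := by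
    refine mul_nonpos_of_nonpos_of_nonneg ?_ h0
    have : 0 ≤ σ * (σ + 1) * (δ ^ (-σ - 2) - η ^ (-σ - 2)) :=
      mul_nonneg (by positivity) (by linarith)
    linarith
  linarith

/-! ### The energy of an abstract weight -/

/-- A finite weight `μ` on the angles together with a function `p` (playing the role of `cos²`)
with values in `[0, 1]`. The last two fields say that `μ` gives mass at least of order `ε` to
the `ε`-neighbourhoods of the two axes. -/
structure Weight (μ : Measure ℝ) (p : ℝ → ℝ) (k : ℝ) : Prop where
  fin : IsFiniteMeasure μ
  meas : Measurable p
  nonneg : ∀ φ, 0 ≤ p φ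
  le_one : ∀ φ, p φ ≤ 1
  k_pos : 0 < k
  near_one : ∀ ε, 0 < ε → ε ≤ 1 / 2 → k * ε ≤ μ.real {φ | 1 - p φ ≤ ε ^ 2}
  near_zero : ∀ ε, 0 < ε → ε ≤ 1 / 2 → k * ε ≤ μ.real {φ | p φ ≤ ε ^ 2}

/-- The interpolation `u p + v (1 - p)`; for `p = cos²`, `u = a²`, `v = b²` it is
`a² cos² + b² sin²`. -/
def Lf (p : ℝ → ℝ) (u v φ : ℝ) : ℝ := u * p φ + v * (1 - p φ)

/-- The functional `∫ (u p + v (1 - p)) ^ (-σ) dμ`, which is `𝓜` in the variables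
`u = a²`, `v = b²` when `σ = s / 2`. -/
def GM (σ : ℝ) (μ : Measure ℝ) (p : ℝ → ℝ) (u v : ℝ) : ℝ := ∫ φ, Lf p u v φ ^ (-σ) ∂μ

/-- The coefficient `A` in the variables `u = a²`, `v = b²`. -/
def GA (σ : ℝ) (μ : Measure ℝ) (p : ℝ → ℝ) (u v : ℝ) : ℝ :=
  ∫ φ, Lf p u v φ ^ (-σ - 1) * p φ ∂μ

/-- The coefficient `B` in the variables `u = a²`, `v = b²`. -/
def GB (σ : ℝ) (μ : Measure ℝ) (p : ℝ → ℝ) (u v : ℝ) : ℝ :=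
  ∫ φ, Lf p u v φ ^ (-σ - 1) * (1 - p φ) ∂μ

/-- The energy `ℰ` in the variables `u = a²`, `v = b²`. -/
def En (σ : ℝ) (μ : Measure ℝ) (p : ℝ → ℝ) (u v : ℝ) : ℝ := GM σ μ p u v + σ * (u + v)

section Abstract

variable {σ k : ℝ} {μ : Measure ℝ} {p : ℝ → ℝ}

lemma Weight.symm (h : Weight μ p k) : Weight μ (fun φ => 1 - p φ) k where
  fin := h.fin
  meas := h.meas.const_sub 1
  nonneg φ := by linarith [h.le_one φ]
  le_one φ := by linarith [h.nonneg φ]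
  k_pos := h.k_pos
  near_one ε h1 h2 := by simpa using h.near_zero ε h1 h2
  near_zero ε h1 h2 := by simpa using h.near_one ε h1 h2

lemma GB_eq (u v : ℝ) : GB σ μ p u v = GA σ μ (fun φ => 1 - p φ) v u := by
  simp only [GA, GB, Lf]
  congr 1
  ext φ
  ring_nf

lemma Weight.Lf_meas (h : Weight μ p k) (u v : ℝ) : Measurable (Lf p u v) := by
  have := h.meas
  unfold Lf
  fun_prop

lemma Weight.le_Lf (h : Weight μ p k) {δ u v : ℝ} (hu : δ ≤ u) (hv : δ ≤ v) (φ : ℝ) :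
    δ ≤ Lf p u v φ := by
  unfold Lf
  nlinarith [h.nonneg φ, h.le_one φ]

lemma Weight.Lf_le (h : Weight μ p k) {R u v : ℝ} (hu : u ≤ R) (hv : v ≤ R) (φ : ℝ) :
    Lf p u v φ ≤ R := by
  unfold Lf
  nlinarith [h.nonneg φ, h.le_one φ]

lemma Weight.Lf_pos (h : Weight μ p k) {u v : ℝ} (hu : 0 < u) (hv : 0 < v) (φ : ℝ) :
    0 < Lf p u v φ :=
  (lt_min hu hv).trans_le (h.le_Lf (min_le_left _ _) (min_le_right _ _) φ)

lemma Weight.integrable_rpow (h : Weight μ p k) {u v τ : ℝ} (hu : 0 < u) (hv : 0 < v)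
    (hτ : τ ≤ 0) : Integrable (fun φ => Lf p u v φ ^ τ) μ := by
  have := h.fin
  refine Integrable.of_bound ((h.Lf_meas u v).pow_const τ).aestronglyMeasurable
    (min u v ^ τ) (Eventually.of_forall fun φ => ?_)
  rw [Real.norm_of_nonneg (Real.rpow_nonneg (h.Lf_pos hu hv φ).le _)]
  exact Real.rpow_le_rpow_of_nonpos (lt_min hu hv)
    (h.le_Lf (min_le_left _ _) (min_le_right _ _) φ) hτ

lemma Weight.integrable_p (h : Weight μ p k) {f : ℝ → ℝ} (hf : Integrable f μ) :
    Integrable (fun φ => f φ * p φ) μ :=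
  hf.mul_bdd (c := 1) h.meas.aestronglyMeasurable (Eventually.of_forall fun φ => by
    rw [Real.norm_of_nonneg (h.nonneg φ)]; exact h.le_one φ)

lemma Weight.quad_integrable (h : Weight μ p k) (α β : ℝ) :
    Integrable (fun φ => (α * p φ + β * (1 - p φ)) ^ 2) μ := by
  have := h.fin
  have := h.meas
  refine Integrable.of_bound (by fun_prop) (α ^ 2 + β ^ 2) (Eventually.of_forall fun φ => ?_)
  rw [Real.norm_of_nonneg (sq_nonneg _)]
  nlinarith [mul_nonneg (mul_nonneg (h.nonneg φ) (sub_nonneg.2 (h.le_one φ)))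
      (sq_nonneg (α - β)),
    mul_nonneg (h.nonneg φ) (sq_nonneg β),
    mul_nonneg (sub_nonneg.2 (h.le_one φ)) (sq_nonneg α)]

/-- The quadratic form `∫ (α p + β (1 - p))² dμ` is positive definite. -/
lemma Weight.quad_lower (h : Weight μ p k) (α β : ℝ) :
    k / 16 * (α ^ 2 + β ^ 2) ≤ ∫ φ, (α * p φ + β * (1 - p φ)) ^ 2 ∂μ := by
  have := h.fin
  -- By symmetry the larger of the two coefficients may be assumed to be `α`.
  have key : ∀ {q : ℝ → ℝ}, Weight μ q k → ∀ α β : ℝ, β ^ 2 ≤ α ^ 2 →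
      k / 16 * (α ^ 2 + β ^ 2) ≤ ∫ φ, (α * q φ + β * (1 - q φ)) ^ 2 ∂μ := by
    intro q hq α β hab
    set S : Set ℝ := {φ | 1 - q φ ≤ (1 / 2 : ℝ) ^ 2} with hS
    have hSm : MeasurableSet S := measurableSet_le (hq.meas.const_sub 1) measurable_const
    have h1 := hq.near_one (1 / 2) (by norm_num) le_rfl
    have hi : Integrable (S.indicator fun _ => α ^ 2 / 4) μ :=
      (integrable_const _).indicator hSm
    have hi2 := hq.quad_integrable α β
    have h2 : ∫ φ, S.indicator (fun _ => α ^ 2 / 4) φ ∂μ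
        ≤ ∫ φ, (α * q φ + β * (1 - q φ)) ^ 2 ∂μ := by
      refine integral_mono hi hi2 fun φ => ?_
      by_cases hφ : φ ∈ S
      · rw [indicator_of_mem hφ]
        have h3 : 1 - q φ ≤ (1 / 2 : ℝ) ^ 2 := hφ
        have h4 := hq.le_one φ
        have h5 : |β| ≤ |α| := sq_le_sq.1 hab
        have h6 : |α| / 2 ≤ |α * q φ + β * (1 - q φ)| := by
          have h7 : |α * q φ| ≤ |α * q φ + β * (1 - q φ)| + |β * (1 - q φ)| := by
            have := abs_sub (α * q φ + β * (1 - q φ)) (β * (1 - q φ))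
            simpa using this
          rw [abs_mul, abs_mul, abs_of_nonneg (hq.nonneg φ),
            abs_of_nonneg (sub_nonneg.2 h4)] at h7
          nlinarith [abs_nonneg α, abs_nonneg β]
        have h8 := pow_le_pow_left₀ (by positivity) h6 2
        rw [sq_abs, div_pow, sq_abs] at h8
        norm_num at h8 ⊢
        linarith
      · rw [indicator_of_notMem hφ]
        positivity
    rw [integral_indicator hSm, setIntegral_const, smul_eq_mul] at h2
    have h9 : k * (1 / 2) * (α ^ 2 / 4) ≤ μ.real S * (α ^ 2 / 4) :=
      mul_le_mul_of_nonneg_right h1 (by positivity)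
    nlinarith [mul_nonneg hq.k_pos.le (sub_nonneg.2 hab)]
  rcases le_total (β ^ 2) (α ^ 2) with hab | hab
  · exact key h α β hab
  · have := key h.symm β α hab
    rw [add_comm (α ^ 2)]
    refine this.trans_eq (integral_congr_ae (Eventually.of_forall fun φ => ?_))
    simp only
    ring

lemma Weight.quad_upper (h : Weight μ p k) (α β : ℝ) :
    ∫ φ, (α * p φ + β * (1 - p φ)) ^ 2 ∂μ ≤ μ.real univ * (α ^ 2 + β ^ 2) := by
  have := h.fin
  have h1 := norm_integral_le_of_norm_le_const (μ := μ)
    (f := fun φ => (α * p φ + β * (1 - p φ)) ^ 2) (C := α ^ 2 + β ^ 2)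
    (Eventually.of_forall fun φ => by
      rw [Real.norm_of_nonneg (sq_nonneg _)]
      nlinarith [mul_nonneg (mul_nonneg (h.nonneg φ) (sub_nonneg.2 (h.le_one φ)))
          (sq_nonneg (α - β)),
        mul_nonneg (h.nonneg φ) (sq_nonneg β),
        mul_nonneg (sub_nonneg.2 (h.le_one φ)) (sq_nonneg α)])
  rw [mul_comm]
  exact (le_abs_self _).trans h1

/-- The integral of the pointwise second-order Taylor polynomial of `r ↦ r ^ (-σ)` along
`Lf p`. -/
lemma Weight.integral_taylor (h : Weight μ p k) (hσ : 0 < σ) {u v : ℝ} (hu : 0 < u) (hv : 0 < v)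
    (u' v' κ : ℝ) :
    Integrable (fun φ => Lf p u v φ ^ (-σ) - σ * Lf p u v φ ^ (-σ - 1) *
        (Lf p u' v' φ - Lf p u v φ) + κ * (Lf p u' v' φ - Lf p u v φ) ^ 2) μ ∧
    ∫ φ, (Lf p u v φ ^ (-σ) - σ * Lf p u v φ ^ (-σ - 1) *
        (Lf p u' v' φ - Lf p u v φ) + κ * (Lf p u' v' φ - Lf p u v φ) ^ 2) ∂μ
      = GM σ μ p u v - σ * (GA σ μ p u v * (u' - u) + GB σ μ p u v * (v' - v))
        + κ * ∫ φ, ((u' - u) * p φ + (v' - v) * (1 - p φ)) ^ 2 ∂μ := by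
  have e : (fun φ => Lf p u v φ ^ (-σ) - σ * Lf p u v φ ^ (-σ - 1) *
        (Lf p u' v' φ - Lf p u v φ) + κ * (Lf p u' v' φ - Lf p u v φ) ^ 2)
      = fun φ => (Lf p u v φ ^ (-σ) - ((σ * (u' - u)) * (Lf p u v φ ^ (-σ - 1) * p φ)
          + (σ * (v' - v)) * (Lf p u v φ ^ (-σ - 1) * (1 - p φ))))
        + κ * ((u' - u) * p φ + (v' - v) * (1 - p φ)) ^ 2 := by
    ext φ
    rw [show Lf p u' v' φ - Lf p u v φ = (u' - u) * p φ + (v' - v) * (1 - p φ) by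
      unfold Lf; ring]
    ring
  have i0 := h.integrable_rpow hu hv (τ := -σ) (by linarith)
  have i1 := h.integrable_rpow hu hv (τ := -σ - 1) (by linarith)
  have iA := (h.integrable_p i1).const_mul (σ * (u' - u))
  have iB := (h.symm.integrable_p i1).const_mul (σ * (v' - v))
  have iQ := (h.quad_integrable (u' - u) (v' - v)).const_mul κ
  have iAB : Integrable (fun φ => σ * (u' - u) * (Lf p u v φ ^ (-σ - 1) * p φ)
      + σ * (v' - v) * (Lf p u v φ ^ (-σ - 1) * (1 - p φ))) μ := iA.add iB
  have i2 : Integrable (fun φ => Lf p u v φ ^ (-σ)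
      - (σ * (u' - u) * (Lf p u v φ ^ (-σ - 1) * p φ)
      + σ * (v' - v) * (Lf p u v φ ^ (-σ - 1) * (1 - p φ)))) μ := i0.sub iAB
  rw [e]
  refine ⟨i2.add iQ, ?_⟩
  rw [integral_add i2 iQ, integral_sub i0 iAB, integral_add iA iB,
    integral_const_mul, integral_const_mul, integral_const_mul]
  unfold GM GA GB
  ring

/-- Strong convexity of the energy on bounded parts of the quadrant, in the form of a quadratic
lower bound by the tangent plane. -/
lemma Weight.En_lower (h : Weight μ p k) (hσ : 0 < σ) {R : ℝ} (hR : 0 < R) :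
    ∃ m > 0, ∀ u v u' v' : ℝ, 0 < u → 0 < v → 0 < u' → 0 < v' →
      u ≤ R → v ≤ R → u' ≤ R → v' ≤ R →
      En σ μ p u v + σ * (1 - GA σ μ p u v) * (u' - u) + σ * (1 - GB σ μ p u v) * (v' - v)
        + m * ((u' - u) ^ 2 + (v' - v) ^ 2) ≤ En σ μ p u' v' := by
  have hk := h.k_pos
  have hκ : 0 < σ * (σ + 1) / 2 * R ^ (-σ - 2) := by positivity
  refine ⟨σ * (σ + 1) / 2 * R ^ (-σ - 2) * (k / 16), by positivity, ?_⟩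
  intro u v u' v' hu hv hu' hv' huR hvR huR' hvR'
  obtain ⟨hi, he⟩ := h.integral_taylor hσ hu hv u' v' (σ * (σ + 1) / 2 * R ^ (-σ - 2))
  have h1 := integral_mono hi (h.integrable_rpow hu' hv' (τ := -σ) (by linarith)) fun φ =>
    rpow_lower hσ (h.Lf_pos hu hv φ) (h.Lf_pos hu' hv' φ) (h.Lf_le huR hvR φ)
      (h.Lf_le huR' hvR' φ)
  rw [he] at h1
  have h2 := mul_le_mul_of_nonneg_left (h.quad_lower (u' - u) (v' - v)) hκ.le
  change _ ≤ GM σ μ p u' v' at h1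
  unfold En
  linarith

/-- Quadratic upper bound of the energy by the tangent plane, away from the axes. -/
lemma Weight.En_upper (h : Weight μ p k) (hσ : 0 < σ) {δ : ℝ} (hδ : 0 < δ) :
    ∃ m ≥ 0, ∀ u v u' v' : ℝ, δ ≤ u → δ ≤ v → δ ≤ u' → δ ≤ v' →
      En σ μ p u' v' ≤
      En σ μ p u v + σ * (1 - GA σ μ p u v) * (u' - u) + σ * (1 - GB σ μ p u v) * (v' - v)
        + m * ((u' - u) ^ 2 + (v' - v) ^ 2) := by
  have hκ : 0 < σ * (σ + 1) / 2 * δ ^ (-σ - 2) := by positivity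
  refine ⟨σ * (σ + 1) / 2 * δ ^ (-σ - 2) * μ.real univ, by positivity, ?_⟩
  intro u v u' v' hu hv hu' hv'
  obtain ⟨hi, he⟩ := h.integral_taylor hσ (hδ.trans_le hu) (hδ.trans_le hv) u' v'
    (σ * (σ + 1) / 2 * δ ^ (-σ - 2))
  have h1 := integral_mono (h.integrable_rpow (hδ.trans_le hu') (hδ.trans_le hv') (τ := -σ)
    (by linarith)) hi fun φ => rpow_upper hσ hδ (h.le_Lf hu hv φ) (h.le_Lf hu' hv' φ)
  rw [he] at h1
  have h2 := mul_le_mul_of_nonneg_left (h.quad_upper (u' - u) (v' - v)) hκ.le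
  change GM σ μ p u' v' ≤ _ at h1
  unfold En
  linarith

/-! ### Differentiability of the energy -/

lemma Weight.hasFDerivAt_En (h : Weight μ p k) (hσ : 0 < σ) {u v : ℝ} (hu : 0 < u) (hv : 0 < v) :
    HasFDerivAt (fun x : ℝ × ℝ => En σ μ p x.1 x.2)
      ((σ * (1 - GA σ μ p u v)) • ContinuousLinearMap.fst ℝ ℝ ℝ
        + (σ * (1 - GB σ μ p u v)) • ContinuousLinearMap.snd ℝ ℝ ℝ) (u, v) := by
  set δ := min u v / 2 with hδ
  set R := max u v + 1 with hR
  have hm := lt_min hu hv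
  have hδ0 : 0 < δ := by positivity
  have hδu : δ < u := by linarith [min_le_left u v]
  have hδv : δ < v := by linarith [min_le_right u v]
  have huR : u < R := by linarith [le_max_left u v]
  have hvR : v < R := by linarith [le_max_right u v]
  obtain ⟨m, hm0, hlow⟩ := h.En_lower hσ (hu.trans huR)
  obtain ⟨M, hM0, hup⟩ := h.En_upper hσ hδ0
  set T : ℝ × ℝ →L[ℝ] ℝ := (σ * (1 - GA σ μ p u v)) • ContinuousLinearMap.fst ℝ ℝ ℝ
    + (σ * (1 - GB σ μ p u v)) • ContinuousLinearMap.snd ℝ ℝ ℝ with hT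
  -- The remainder after subtracting the tangent plane is trapped between `0` and a multiple of
  -- the squared distance, hence has derivative zero.
  have key : HasFDerivAt (fun x : ℝ × ℝ => En σ μ p x.1 x.2 - En σ μ p u v - T (x - (u, v)))
      (0 : ℝ × ℝ →L[ℝ] ℝ) (u, v) := by
    refine Asymptotics.IsBigO.hasFDerivAt (n := 2) ?_ one_lt_two
    refine Asymptotics.IsBigO.of_bound (2 * M) ?_
    have hnhds : Ioo δ R ×ˢ Ioo δ R ∈ 𝓝 (u, v) :=
      prod_mem_nhds (Ioo_mem_nhds hδu huR) (Ioo_mem_nhds hδv hvR)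
    filter_upwards [hnhds] with x hx
    obtain ⟨⟨h1, h2⟩, h3, h4⟩ := hx
    have hTx : T (x - (u, v)) = σ * (1 - GA σ μ p u v) * (x.1 - u)
        + σ * (1 - GB σ μ p u v) * (x.2 - v) := by simp [hT]
    have hl := hlow u v x.1 x.2 hu hv (hδ0.trans h1) (hδ0.trans h3) huR.le hvR.le h2.le h4.le
    have hr := hup u v x.1 x.2 hδu.le hδv.le h1.le h3.le
    have hq : 0 ≤ m * ((x.1 - u) ^ 2 + (x.2 - v) ^ 2) := by positivity
    have hn1 : (x.1 - u) ^ 2 ≤ ‖x - (u, v)‖ ^ 2 := by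
      rw [← sq_abs]
      exact pow_le_pow_left₀ (abs_nonneg _) (norm_fst_le (x - (u, v))) 2
    have hn2 : (x.2 - v) ^ 2 ≤ ‖x - (u, v)‖ ^ 2 := by
      rw [← sq_abs]
      exact pow_le_pow_left₀ (abs_nonneg _) (norm_snd_le (x - (u, v))) 2
    have hMM := mul_le_mul_of_nonneg_left (add_le_add hn1 hn2) hM0
    rw [hTx, Real.norm_of_nonneg (by linarith), norm_pow, norm_norm]
    linarith
  have h2 : HasFDerivAt (fun x : ℝ × ℝ => T (x - (u, v))) T (u, v) :=
    T.hasFDerivAt.comp (u, v) ((hasFDerivAt_id (u, v)).sub_const (u, v))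
  have h3 := (key.add h2).add_const (En σ μ p u v)
  rw [zero_add] at h3
  exact h3.congr_of_eventuallyEq (Eventually.of_forall fun x => by simp)

lemma Weight.hasDerivWithinAt_En (h : Weight μ p k) (hσ : 0 < σ) {u v : ℝ → ℝ} {u' v' t : ℝ}
    {S : Set ℝ} (hu : 0 < u t) (hv : 0 < v t) (hu' : HasDerivWithinAt u u' S t)
    (hv' : HasDerivWithinAt v v' S t) :
    HasDerivWithinAt (fun t => En σ μ p (u t) (v t))
      (σ * (1 - GA σ μ p (u t) (v t)) * u' + σ * (1 - GB σ μ p (u t) (v t)) * v') S t := by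
  have h1 := (h.hasFDerivAt_En hσ hu hv).comp_hasDerivWithinAt t (hu'.prodMk hv')
  refine h1.congr_deriv ?_
  simp

lemma Weight.le_En (h : Weight μ p k) {u v : ℝ} (hu : 0 < u) (hv : 0 < v) :
    σ * (u + v) ≤ En σ μ p u v := by
  have : 0 ≤ GM σ μ p u v :=
    integral_nonneg fun φ => Real.rpow_nonneg (h.Lf_pos hu hv φ).le _
  unfold En
  linarith

/-! ### Critical points -/

/-- `A` blows up as `u → 0`, uniformly for bounded `v`: on `{1 - p ≤ u}`, a set of mass at least
`k √u`, the integrand is at least of order `u ^ (-σ - 1)`. -/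
lemma Weight.one_lt_GA (h : Weight μ p k) (hσ : 0 < σ) {V : ℝ} (hV : 0 < V) :
    ∃ δ > 0, ∀ u v : ℝ, 0 < u → u ≤ δ → 0 < v → v ≤ V → 1 < GA σ μ p u v := by
  have := h.fin
  have hk := h.k_pos
  set q := (1 + V) ^ (-σ - 1) with hq
  have hq0 : 0 < q := by positivity
  refine ⟨min (1 / 4) ((k * q / 2) ^ 2), by positivity, ?_⟩
  intro u v hu huδ hv hvV
  have hu4 : u ≤ 1 / 4 := huδ.trans (min_le_left _ _)
  set ε := √u with hε
  have hε0 : 0 < ε := Real.sqrt_pos.2 hu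
  have hεu : ε ^ 2 = u := Real.sq_sqrt hu.le
  have hε2 : ε ≤ 1 / 2 := by nlinarith
  have hεk : ε ≤ k * q / 2 :=
    (sq_le_sq₀ hε0.le (by positivity)).1 (by rw [hεu]; exact huδ.trans (min_le_right _ _))
  set S : Set ℝ := {φ | 1 - p φ ≤ ε ^ 2} with hS
  have hSm : MeasurableSet S := measurableSet_le (h.meas.const_sub 1) measurable_const
  have h1 : k * ε ≤ μ.real S := h.near_one ε hε0 hε2
  have hint : Integrable (fun φ => Lf p u v φ ^ (-σ - 1) * p φ) μ :=
    h.integrable_p (h.integrable_rpow hu hv (by linarith))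
  have hi : Integrable (S.indicator fun _ => q * u ^ (-1 : ℝ) * (3 / 4)) μ :=
    (integrable_const _).indicator hSm
  have h2 : ∫ φ, S.indicator (fun _ => q * u ^ (-1 : ℝ) * (3 / 4)) φ ∂μ ≤ GA σ μ p u v := by
    refine integral_mono hi hint fun φ => ?_
    by_cases hφ : φ ∈ S
    · rw [indicator_of_mem hφ]
      have h3 : 1 - p φ ≤ u := by rw [← hεu]; exact hφ
      have h4 : Lf p u v φ ≤ (1 + V) * u := by
        unfold Lf
        nlinarith [h.nonneg φ, h.le_one φ]
      have h5 : q * u ^ (-1 : ℝ) ≤ Lf p u v φ ^ (-σ - 1) := by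
        refine le_trans ?_ (Real.rpow_le_rpow_of_nonpos (h.Lf_pos hu hv φ) h4 (by linarith))
        rw [Real.mul_rpow (by linarith) hu.le]
        exact mul_le_mul_of_nonneg_left
          (Real.rpow_le_rpow_of_exponent_ge hu (by linarith) (by linarith)) hq0.le
      exact mul_le_mul h5 (by linarith) (by norm_num)
        (Real.rpow_nonneg (h.Lf_pos hu hv φ).le _)
    · rw [indicator_of_notMem hφ]
      exact mul_nonneg (Real.rpow_nonneg (h.Lf_pos hu hv φ).le _) (h.nonneg φ)
  rw [integral_indicator hSm, setIntegral_const, smul_eq_mul] at h2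
  refine lt_of_lt_of_le ?_ h2
  refine lt_of_lt_of_le ?_ (mul_le_mul_of_nonneg_right h1 (by positivity))
  rw [Real.rpow_neg_one, ← hεu]
  have : k * ε * (q * (ε ^ 2)⁻¹ * (3 / 4)) = 3 / 4 * (k * q) / ε := by
    field_simp
  rw [this, lt_div_iff₀ hε0]
  nlinarith [mul_pos hk hq0]

lemma Weight.one_lt_GB (h : Weight μ p k) (hσ : 0 < σ) {V : ℝ} (hV : 0 < V) :
    ∃ δ > 0, ∀ u v : ℝ, 0 < u → u ≤ V → 0 < v → v ≤ δ → 1 < GB σ μ p u v := by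
  obtain ⟨δ, hδ, H⟩ := h.symm.one_lt_GA hσ hV
  exact ⟨δ, hδ, fun u v hu huV hv hvδ => by rw [GB_eq]; exact H v u hv hvδ hu huV⟩

lemma deriv_nonneg_of_min_right {f : ℝ → ℝ} {d x r : ℝ} (hf : HasDerivAt f d x) (hr : x < r)
    (hmin : ∀ y ∈ Ioo x r, f x ≤ f y) : 0 ≤ d := by
  refine ge_of_tendsto (hasDerivAt_iff_tendsto_slope_left_right.1 hf).2 ?_
  filter_upwards [Ioo_mem_nhdsGT hr] with y hy
  rw [slope_def_field]
  exact div_nonneg (by linarith [hmin y hy]) (by linarith [hy.1])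

lemma deriv_nonpos_of_min_left {f : ℝ → ℝ} {d x l : ℝ} (hf : HasDerivAt f d x) (hl : l < x)
    (hmin : ∀ y ∈ Ioo l x, f x ≤ f y) : d ≤ 0 := by
  refine le_of_tendsto (hasDerivAt_iff_tendsto_slope_left_right.1 hf).1 ?_
  filter_upwards [Ioo_mem_nhdsLT hl] with y hy
  rw [slope_def_field]
  exact div_nonpos_of_nonneg_of_nonpos (by linarith [hmin y hy]) (by linarith [hy.2])

/-- The energy has a critical point: minimize it over a square `[δ, V]²`. The coercive term keeps
the minimizer off the sides at `V`, and the blow-up of `A` and `B` keeps it off those at `δ`. -/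
lemma Weight.exists_crit (h : Weight μ p k) (hσ : 0 < σ) :
    ∃ u v : ℝ, 0 < u ∧ 0 < v ∧ GA σ μ p u v = 1 ∧ GB σ μ p u v = 1 := by
  set V := En σ μ p 1 1 / σ + 1 with hVdef
  have hE1 : σ * (1 + 1) ≤ En σ μ p 1 1 := h.le_En one_pos one_pos
  have hEV : 2 ≤ En σ μ p 1 1 / σ := by rw [le_div_iff₀ hσ]; linarith
  have hV : 0 < V := by linarith
  obtain ⟨δ₁, hδ₁, H₁⟩ := h.one_lt_GA hσ hV
  obtain ⟨δ₂, hδ₂, H₂⟩ := h.one_lt_GB hσ hV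
  set δ := min 1 (min δ₁ δ₂) with hδdef
  have hδ : 0 < δ := by positivity
  have hδ1 : δ ≤ 1 := min_le_left _ _
  have hδa : δ ≤ δ₁ := (min_le_right _ _).trans (min_le_left _ _)
  have hδb : δ ≤ δ₂ := (min_le_right _ _).trans (min_le_right _ _)
  have hcont : ContinuousOn (fun x : ℝ × ℝ => En σ μ p x.1 x.2) (Icc δ V ×ˢ Icc δ V) :=
    fun x hx => (h.hasFDerivAt_En hσ (hδ.trans_le hx.1.1)
      (hδ.trans_le hx.2.1)).continuousAt.continuousWithinAt
  have h11 : ((1 : ℝ), (1 : ℝ)) ∈ Icc δ V ×ˢ Icc δ V :=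
    ⟨⟨hδ1, by linarith⟩, ⟨hδ1, by linarith⟩⟩
  obtain ⟨⟨u, v⟩, ⟨⟨hu1, hu2⟩, hv1, hv2⟩, hmin⟩ :=
    (isCompact_Icc.prod isCompact_Icc).exists_isMinOn ⟨_, h11⟩ hcont
  simp only at hu1 hu2 hv1 hv2
  have hu : 0 < u := hδ.trans_le hu1
  have hv : 0 < v := hδ.trans_le hv1
  have hle : ∀ x y : ℝ, x ∈ Icc δ V → y ∈ Icc δ V → En σ μ p u v ≤ En σ μ p x y :=
    fun x y hx hy => hmin (show (x, y) ∈ Icc δ V ×ˢ Icc δ V from ⟨hx, hy⟩)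
  have hsum : u + v ≤ V - 1 := by
    have h1 := (h.le_En (σ := σ) hu hv).trans (hle 1 1 h11.1 h11.2)
    have : u + v ≤ En σ μ p 1 1 / σ := by rw [le_div_iff₀ hσ]; linarith
    linarith
  have dU : HasDerivAt (fun x => En σ μ p x v) (σ * (1 - GA σ μ p u v)) u := by
    have := h.hasDerivWithinAt_En hσ (u := id) (v := fun _ => v) (t := u) (S := univ) hu hv
      (hasDerivAt_id u).hasDerivWithinAt (hasDerivAt_const u v).hasDerivWithinAt
    simpa using this
  have dV : HasDerivAt (fun y => En σ μ p u y) (σ * (1 - GB σ μ p u v)) v := by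
    have := h.hasDerivWithinAt_En hσ (u := fun _ => u) (v := id) (t := v) (S := univ) hu hv
      (hasDerivAt_const v u).hasDerivWithinAt (hasDerivAt_id v).hasDerivWithinAt
    simpa using this
  have hA : GA σ μ p u v ≤ 1 := by
    have := deriv_nonneg_of_min_right dU (show u < V by linarith)
      fun y hy => hle y v ⟨hu1.trans hy.1.le, hy.2.le⟩ ⟨hv1, hv2⟩
    linarith [nonneg_of_mul_nonneg_right this hσ]
  have hB : GB σ μ p u v ≤ 1 := by
    have := deriv_nonneg_of_min_right dV (show v < V by linarith)
      fun y hy => hle u y ⟨hu1, hu2⟩ ⟨hv1.trans hy.1.le, hy.2.le⟩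
    linarith [nonneg_of_mul_nonneg_right this hσ]
  have hδu : δ < u := by
    by_contra! hc
    exact absurd (H₁ u v hu (hc.trans hδa) hv hv2) hA.not_gt
  have hδv : δ < v := by
    by_contra! hc
    exact absurd (H₂ u v hu hu2 hv (hc.trans hδb)) hB.not_gt
  refine ⟨u, v, hu, hv, le_antisymm hA ?_, le_antisymm hB ?_⟩
  · have := deriv_nonpos_of_min_left dU hδu
      fun y hy => hle y v ⟨hy.1.le, hy.2.le.trans hu2⟩ ⟨hv1, hv2⟩
    linarith [nonpos_of_mul_nonpos_right this hσ]
  · have := deriv_nonpos_of_min_left dV hδv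
      fun y hy => hle u y ⟨hu1, hu2⟩ ⟨hy.1.le, hy.2.le.trans hv2⟩
    linarith [nonpos_of_mul_nonpos_right this hσ]

/-- Two distinct critical points would each have strictly smaller energy than the other. -/
lemma Weight.crit_unique (h : Weight μ p k) (hσ : 0 < σ) {u v u' v' : ℝ} (hu : 0 < u)
    (hv : 0 < v) (hu' : 0 < u') (hv' : 0 < v') (hA : GA σ μ p u v = 1) (hB : GB σ μ p u v = 1)
    (hA' : GA σ μ p u' v' = 1) (hB' : GB σ μ p u' v' = 1) : u = u' ∧ v = v' := by
  obtain ⟨m, hm, H⟩ := h.En_lower hσ (R := u + v + u' + v') (by positivity)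
  have h1 := H u v u' v' hu hv hu' hv' (by linarith) (by linarith) (by linarith) (by linarith)
  have h2 := H u' v' u v hu' hv' hu hv (by linarith) (by linarith) (by linarith) (by linarith)
  rw [hA, hB] at h1
  rw [hA', hB'] at h2
  have h3 : m * ((u' - u) ^ 2 + (v' - v) ^ 2) ≤ 0 := by nlinarith
  have h4 := nonpos_of_mul_nonpos_right h3 hm
  constructor
  · nlinarith [sq_nonneg (u' - u), sq_nonneg (v' - v)]
  · nlinarith [sq_nonneg (u' - u), sq_nonneg (v' - v)]

/-! ### The flow -/

lemma le_initial {f f' : ℝ → ℝ} (hf : ∀ t, 0 ≤ t → HasDerivWithinAt f (f' t) (Ici 0) t)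
    (hf' : ∀ t, 0 ≤ t → f' t ≤ 0) {t : ℝ} (ht : 0 ≤ t) : f t ≤ f 0 :=
  image_le_of_deriv_right_le_deriv_boundary (a := 0) (b := t) (B := fun _ => f 0)
    (B' := fun _ => 0)
    (fun x hx => ((hf x hx.1).continuousWithinAt).mono Icc_subset_Ici_self)
    (fun x hx => (hf x hx.1).mono (Ici_subset_Ici.2 hx.1)) le_rfl continuousOn_const
    (fun _ _ => hasDerivWithinAt_const ..) (fun x hx => hf' x hx.1) ⟨ht, le_rfl⟩

/-- A function that increases strictly whenever it takes the value `m` cannot fall below `m`. -/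
lemma barrier {f f' : ℝ → ℝ} {m : ℝ} (hf : ∀ t, 0 ≤ t → HasDerivWithinAt f (f' t) (Ici 0) t)
    (h0 : m ≤ f 0) (hf' : ∀ t, 0 ≤ t → f t = m → 0 < f' t) {t : ℝ} (ht : 0 ≤ t) : m ≤ f t := by
  have := image_le_of_deriv_right_lt_deriv_boundary (a := 0) (b := t) (f := fun x => -f x)
    (f' := fun x => -f' x) (B := fun _ => -m) (B' := fun _ => 0)
    (fun x hx => ((hf x hx.1).continuousWithinAt).neg.mono Icc_subset_Ici_self)
    (fun x hx => ((hf x hx.1).mono (Ici_subset_Ici.2 hx.1)).neg) (by linarith)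
    (fun _ => hasDerivAt_const ..)
    (fun x hx hx2 => by linarith [hf' x hx.1 (by linarith)]) ⟨ht, le_rfl⟩
  linarith

lemma tendsto_of_sq_le {f g : ℝ → ℝ} {x : ℝ} (hg : Tendsto g atTop (𝓝 0))
    (hfg : ∀ t, 0 ≤ t → (f t - x) ^ 2 ≤ g t) : Tendsto f atTop (𝓝 x) := by
  have h1 : Tendsto (fun t => (f t - x) ^ 2) atTop (𝓝 0) :=
    squeeze_zero' (Eventually.of_forall fun t => sq_nonneg _)
      ((eventually_ge_atTop 0).mono hfg) hg
  have h2 := h1.sqrt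
  simp only [Real.sqrt_sq_eq_abs, Real.sqrt_zero] at h2
  have h3 := ((tendsto_zero_iff_abs_tendsto_zero _).2 h2).add_const x
  simpa using h3

/-- In the variables `u = a²`, `v = b²` the system is a gradient flow of `En` for a
position-dependent metric. The energy bound and the blow-up of `A`, `B` trap the trajectory in a
compact square, where strong convexity gives a Polyak–Łojasiewicz inequality and hence exponential
decay of the energy gap; strong convexity at the critical point turns it into convergence. -/
lemma Weight.flow (h : Weight μ p k) (hσ : 0 < σ) {u₀ v₀ : ℝ} (hu₀ : 0 < u₀) (hv₀ : 0 < v₀)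
    (hA : GA σ μ p u₀ v₀ = 1) (hB : GB σ μ p u₀ v₀ = 1) {u v : ℝ → ℝ}
    (hu : ∀ t, 0 ≤ t → 0 < u t) (hv : ∀ t, 0 ≤ t → 0 < v t)
    (hu' : ∀ t, 0 ≤ t →
      HasDerivWithinAt u (4 * (GA σ μ p (u t) (v t) - 1) * u t) (Ici 0) t)
    (hv' : ∀ t, 0 ≤ t →
      HasDerivWithinAt v (4 * (GB σ μ p (u t) (v t) - 1) * v t) (Ici 0) t) :
    (∃ C lam : ℝ, 0 < C ∧ 0 < lam ∧ ∀ t : ℝ, 0 ≤ t →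
      En σ μ p (u t) (v t) - En σ μ p u₀ v₀ ≤ C * Real.exp (-lam * t)) ∧
    Tendsto u atTop (𝓝 u₀) ∧ Tendsto v atTop (𝓝 v₀) := by
  have hE' : ∀ t, 0 ≤ t → HasDerivWithinAt (fun t => En σ μ p (u t) (v t))
      (-(4 * σ) * ((1 - GA σ μ p (u t) (v t)) ^ 2 * u t
        + (1 - GB σ μ p (u t) (v t)) ^ 2 * v t)) (Ici 0) t := fun t ht =>
    (h.hasDerivWithinAt_En hσ (hu t ht) (hv t ht) (hu' t ht) (hv' t ht)).congr_deriv (by ring)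
  have hE0 : ∀ t, 0 ≤ t → En σ μ p (u t) (v t) ≤ En σ μ p (u 0) (v 0) := fun t ht => by
    refine le_initial hE' (fun t ht => ?_) ht
    have := hu t ht
    have := hv t ht
    have : 0 ≤ 4 * σ * ((1 - GA σ μ p (u t) (v t)) ^ 2 * u t
        + (1 - GB σ μ p (u t) (v t)) ^ 2 * v t) := by positivity
    linarith
  set V := En σ μ p (u 0) (v 0) / σ + u₀ + v₀ with hVdef
  have hsum : ∀ t, 0 ≤ t → u t + v t ≤ En σ μ p (u 0) (v 0) / σ := fun t ht => by
    rw [le_div_iff₀ hσ]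
    linarith [h.le_En (σ := σ) (hu t ht) (hv t ht), hE0 t ht]
  have hEpos : 0 < En σ μ p (u 0) (v 0) / σ := by
    linarith [hsum 0 le_rfl, hu 0 le_rfl, hv 0 le_rfl]
  have hV : 0 < V := by linarith
  have huV : ∀ t, 0 ≤ t → u t ≤ V := fun t ht => by linarith [hsum t ht, hv t ht]
  have hvV : ∀ t, 0 ≤ t → v t ≤ V := fun t ht => by linarith [hsum t ht, hu t ht]
  obtain ⟨δ₁, hδ₁, H₁⟩ := h.one_lt_GA hσ hV
  obtain ⟨δ₂, hδ₂, H₂⟩ := h.one_lt_GB hσ hV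
  set δ := min (min δ₁ (u 0)) (min δ₂ (v 0)) with hδdef
  have hδ : 0 < δ := lt_min (lt_min hδ₁ (hu 0 le_rfl)) (lt_min hδ₂ (hv 0 le_rfl))
  have huδ : ∀ t, 0 ≤ t → δ ≤ u t := fun t ht => by
    refine barrier hu' ((min_le_left _ _).trans (min_le_right _ _)) (fun t ht he => ?_) ht
    have h1 := H₁ (u t) (v t) (hu t ht) (he.le.trans ((min_le_left _ _).trans (min_le_left _ _)))
      (hv t ht) (hvV t ht)
    exact mul_pos (by linarith) (hu t ht)
  have hvδ : ∀ t, 0 ≤ t → δ ≤ v t := fun t ht => by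
    refine barrier hv' ((min_le_right _ _).trans (min_le_right _ _)) (fun t ht he => ?_) ht
    have h1 := H₂ (u t) (v t) (hu t ht) (huV t ht) (hv t ht)
      (he.le.trans ((min_le_right _ _).trans (min_le_left _ _)))
    exact mul_pos (by linarith) (hv t ht)
  obtain ⟨m, hm, hlow⟩ := h.En_lower hσ hV
  have hgap : ∀ t, 0 ≤ t → m * ((u t - u₀) ^ 2 + (v t - v₀) ^ 2)
      ≤ En σ μ p (u t) (v t) - En σ μ p u₀ v₀ := fun t ht => by
    have := hlow u₀ v₀ (u t) (v t) hu₀ hv₀ (hu t ht) (hv t ht) (by linarith) (by linarith)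
      (huV t ht) (hvV t ht)
    rw [hA, hB] at this
    linarith
  -- The Polyak–Łojasiewicz inequality: minimize the quadratic lower bound over the increment.
  have hPL : ∀ t, 0 ≤ t → 4 * m * (En σ μ p (u t) (v t) - En σ μ p u₀ v₀)
      ≤ σ ^ 2 * ((1 - GA σ μ p (u t) (v t)) ^ 2 + (1 - GB σ μ p (u t) (v t)) ^ 2) :=
    fun t ht => by
      have := hlow (u t) (v t) u₀ v₀ (hu t ht) (hv t ht) hu₀ hv₀ (huV t ht) (hvV t ht)
        (by linarith) (by linarith)
      nlinarith [sq_nonneg (σ * (1 - GA σ μ p (u t) (v t)) + 2 * m * (u₀ - u t)),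
        sq_nonneg (σ * (1 - GB σ μ p (u t) (v t)) + 2 * m * (v₀ - v t))]
  set lam := 16 * m * δ / σ with hlam
  have hlam0 : 0 < lam := by positivity
  have hdecay : ∀ t, 0 ≤ t → En σ μ p (u t) (v t) - En σ μ p u₀ v₀
      ≤ (En σ μ p (u 0) (v 0) - En σ μ p u₀ v₀) * Real.exp (-lam * t) := fun t ht => by
    have hg := le_initial
      (f := fun t => (En σ μ p (u t) (v t) - En σ μ p u₀ v₀) * Real.exp (lam * t))
      (fun t ht => ((hE' t ht).sub_const _).mul
        (((hasDerivAt_id t).const_mul lam).exp.hasDerivWithinAt)) (fun t ht => ?_) ht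
    · simp only [mul_zero, Real.exp_zero, mul_one] at hg
      rw [neg_mul, Real.exp_neg, ← div_eq_mul_inv, le_div_iff₀ (Real.exp_pos _)]
      exact hg
    · have h1 := hPL t ht
      have h2 : lam * (En σ μ p (u t) (v t) - En σ μ p u₀ v₀)
          ≤ 4 * σ * δ * ((1 - GA σ μ p (u t) (v t)) ^ 2
            + (1 - GB σ μ p (u t) (v t)) ^ 2) := by
        have h3 := mul_le_mul_of_nonneg_left h1 (show 0 ≤ 4 * δ / σ by positivity)
        have e1 : 4 * δ / σ * (4 * m * (En σ μ p (u t) (v t) - En σ μ p u₀ v₀))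
          = lam * (En σ μ p (u t) (v t) - En σ μ p u₀ v₀) := by rw [hlam]; ring
        rw [e1] at h3
        refine h3.trans_eq ?_
        field_simp
      have h4 : 4 * σ * δ * ((1 - GA σ μ p (u t) (v t)) ^ 2
            + (1 - GB σ μ p (u t) (v t)) ^ 2)
          ≤ 4 * σ * ((1 - GA σ μ p (u t) (v t)) ^ 2 * u t
            + (1 - GB σ μ p (u t) (v t)) ^ 2 * v t) := by
        have h5 := mul_le_mul_of_nonneg_left (huδ t ht) (sq_nonneg (1 - GA σ μ p (u t) (v t)))
        have h6 := mul_le_mul_of_nonneg_left (hvδ t ht) (sq_nonneg (1 - GB σ μ p (u t) (v t)))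
        have h7 := mul_le_mul_of_nonneg_left (add_le_add h5 h6) (show 0 ≤ 4 * σ by positivity)
        linarith
      have h8 := mul_nonneg (Real.exp_pos (lam * t)).le (sub_nonneg.2 (h2.trans h4))
      simp only [id_eq, mul_one]
      linarith
  have hC0 : 0 ≤ En σ μ p (u 0) (v 0) - En σ μ p u₀ v₀ :=
    le_trans (by positivity) (hgap 0 le_rfl)
  have hexp : Tendsto (fun t => (En σ μ p (u 0) (v 0) - En σ μ p u₀ v₀)
      * Real.exp (-lam * t) / m) atTop (𝓝 0) := by
    have h1 : Tendsto (fun t => -lam * t) atTop atBot :=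
      tendsto_id.const_mul_atTop_of_neg (by linarith)
    have h2 := ((Real.tendsto_exp_atBot.comp h1).const_mul
      (En σ μ p (u 0) (v 0) - En σ μ p u₀ v₀)).div_const m
    simpa using h2
  refine ⟨⟨En σ μ p (u 0) (v 0) - En σ μ p u₀ v₀ + 1, lam, by linarith, hlam0, fun t ht => ?_⟩,
    tendsto_of_sq_le hexp fun t ht => ?_, tendsto_of_sq_le hexp fun t ht => ?_⟩
  · linarith [hdecay t ht, Real.exp_pos (-lam * t)]
  · rw [le_div_iff₀ hm]
    nlinarith [hdecay t ht, hgap t ht, mul_nonneg hm.le (sq_nonneg (v t - v₀))]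
  · rw [le_div_iff₀ hm]
    nlinarith [hdecay t ht, hgap t ht, mul_nonneg hm.le (sq_nonneg (u t - u₀))]

end Abstract

/-! ### Continuity of the transformed angle function -/

/-- A smooth `π`-periodic function oscillates at most like `|sin|`. -/
lemma SatisfiesH.abs_sub_le {Ω : ℝ → ℝ} (h : SatisfiesH Ω) :
    ∃ C : ℝ, ∀ ψ u : ℝ, |Ω (u + ψ) - Ω ψ| ≤ C * |Real.sin u| := by
  obtain ⟨hs, -, -, hp⟩ := h
  have hper : Function.Periodic Ω π := hp
  have hdiff : Differentiable ℝ Ω := hs.differentiable (by simp)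
  have hcont : Continuous (deriv Ω) := hs.continuous_deriv (by simp)
  have hdper : Function.Periodic (deriv Ω) π := fun x => by
    rw [← deriv_comp_add_const]
    congr 1
    exact funext hp
  obtain ⟨L, hL⟩ := (isCompact_Icc (a := (0 : ℝ)) (b := π)).exists_bound_of_continuousOn
    hcont.continuousOn
  have hL' : ∀ x, ‖deriv Ω x‖ ≤ L := fun x => by
    obtain ⟨y, hy, he⟩ := hdper.exists_mem_Ico₀ Real.pi_pos x
    rw [he]
    exact hL y (Ico_subset_Icc_self hy)
  have hL0 : 0 ≤ L := (norm_nonneg _).trans (hL' 0)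
  refine ⟨L * (π / 2), fun ψ u => ?_⟩
  -- Shift `u` by a multiple of `π` into `[-π/2, π/2]`, where `|u| ≤ (π/2) |sin u|`.
  obtain ⟨n, ⟨h1, h2⟩, -⟩ := existsUnique_sub_zsmul_mem_Ico Real.pi_pos u (-(π / 2))
  simp only [zsmul_eq_mul] at h1 h2
  set w := u - n * π with hw
  have hsin : |Real.sin u| = |Real.sin w| := by
    rw [hw, Real.sin_sub_int_mul_pi, abs_mul, abs_zpow]
    simp
  have hΩ : Ω (u + ψ) = Ω (w + ψ) := by
    rw [show w + ψ = u + ψ - n * π by rw [hw]; ring]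
    exact (hper.sub_int_mul_eq n).symm
  have hm : ‖Ω (w + ψ) - Ω ψ‖ ≤ L * ‖w + ψ - ψ‖ :=
    Convex.norm_image_sub_le_of_norm_deriv_le (s := univ) (fun x _ => hdiff x)
      (fun x _ => hL' x) convex_univ (mem_univ _) (mem_univ _)
  rw [add_sub_cancel_right, Real.norm_eq_abs, Real.norm_eq_abs] at hm
  have hJ : 2 / π * |w| ≤ |Real.sin w| :=
    Real.mul_abs_le_abs_sin (abs_le.2 ⟨h1, by linarith⟩)
  rw [hΩ, hsin]
  have hJ2 : |w| ≤ π / 2 * |Real.sin w| := by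
    have := mul_le_mul_of_nonneg_left hJ (show 0 ≤ π / 2 by positivity)
    have e : π / 2 * (2 / π * |w|) = |w| := by field_simp
    rwa [e] at this
  calc _ ≤ L * |w| := hm
    _ ≤ L * (π / 2 * |Real.sin w|) := mul_le_mul_of_nonneg_left hJ2 hL0
    _ = _ := by ring

lemma intervalIntegrable_abs_sin_rpow {r : ℝ} (hr : -1 < r) (hr0 : r ≤ 0) (a b : ℝ) :
    IntervalIntegrable (fun u => |Real.sin u| ^ r) volume a b := by
  have hmeas : Measurable fun u => |Real.sin u| ^ r :=
    (Real.measurable_sin.abs).pow_const r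
  have h1 : IntervalIntegrable (fun u => |Real.sin u| ^ r) volume 0 (π / 2) := by
    refine ((intervalIntegral.intervalIntegrable_rpow' (a := 0) (b := π / 2) hr).const_mul
      ((2 / π) ^ r)).mono_fun hmeas.aestronglyMeasurable ?_
    rw [uIoc_of_le (by positivity)]
    refine (ae_restrict_iff' measurableSet_Ioc).2 (Eventually.of_forall fun u hu => ?_)
    have hu0 : 0 < u := hu.1
    beta_reduce
    rw [Real.norm_of_nonneg (by positivity), Real.norm_of_nonneg (by positivity),
      ← Real.mul_rpow (by positivity) hu0.le]
    refine Real.rpow_le_rpow_of_nonpos (by positivity) ?_ hr0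
    exact (Real.mul_le_sin hu0.le hu.2).trans (le_abs_self _)
  have h2 : IntervalIntegrable (fun u => |Real.sin u| ^ r) volume (-(π / 2)) 0 := by
    have := h1.comp_sub_left 0
    simp only [zero_sub, sub_zero, Real.sin_neg, abs_neg] at this
    exact this.symm
  have hper : Function.Periodic (fun u => |Real.sin u| ^ r) π := fun u => by
    simp [Real.sin_add_pi]
  refine hper.intervalIntegrable Real.pi_ne_zero (t := -(π / 2)) ?_ a b
  rw [show -(π / 2) + π = π / 2 by ring]
  exact h2.trans h1

/-- The form of `Ω̃` in which the singularity of the kernel sits at fixed points. -/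
lemma Omt_eq {s : ℝ} {Ω : ℝ → ℝ} (h : SatisfiesH Ω) (φ : ℝ) :
    Omt s Ω φ = tauC (2 - s) * (∫ u in (-π)..π,
      |Real.sin u| ^ (-2 + s) * (Ω (u + (φ + π / 2)) - Ω (φ + π / 2)))
      + cC s * Ω (φ + π / 2) := by
  have hper : Function.Periodic (fun u =>
      |Real.sin u| ^ (-2 + s) * (Ω (u + (φ + π / 2)) - Ω (φ + π / 2))) (2 * π) := fun u => by
    simp only [Real.sin_add_two_pi]
    rw [show u + 2 * π + (φ + π / 2) = u + (φ + π / 2) + 2 * π by ring, h.2.1]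
  have h1 := intervalIntegral.integral_comp_sub_right (a := -π) (b := π) (fun u =>
      |Real.sin u| ^ (-2 + s) * (Ω (u + (φ + π / 2)) - Ω (φ + π / 2))) (φ + π / 2)
  have h2 := hper.intervalIntegral_add_eq (-π - (φ + π / 2)) (-π)
  rw [show -π - (φ + π / 2) + 2 * π = π - (φ + π / 2) by ring,
    show -π + 2 * π = π by ring] at h2
  unfold Omt
  rw [← h2, ← h1]
  congr 3
  ext θ
  rw [sub_add_cancel, show θ - (φ + π / 2) = -(φ - θ + π / 2) by ring, Real.sin_neg,
    Real.sin_add_pi_div_two, abs_neg]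

/-- Dominated convergence: the oscillation of `Ω` cancels one power of the singularity, leaving
the integrable majorant `|sin u| ^ (s - 1)`. -/
lemma Omt_continuous {s : ℝ} (hs0 : 0 < s) (hs1 : s < 1) {Ω : ℝ → ℝ} (h : SatisfiesH Ω) :
    Continuous (Omt s Ω) := by
  have hΩ : Continuous Ω := h.1.continuous
  obtain ⟨C, hC⟩ := h.abs_sub_le
  rw [funext (Omt_eq h)]
  refine Continuous.add (continuous_const.mul ?_) (by fun_prop)
  refine intervalIntegral.continuous_of_dominated_interval
    (bound := fun u => C * |Real.sin u| ^ (s - 1)) (fun φ => ?_) (fun φ => ?_)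
    ((intervalIntegrable_abs_sin_rpow (by linarith) (by linarith) _ _).const_mul C) ?_
  · have : Measurable fun u => |Real.sin u| ^ (-2 + s) := (Real.measurable_sin.abs).pow_const _
    have h2 : Measurable fun u => Ω (u + (φ + π / 2)) - Ω (φ + π / 2) := by fun_prop
    exact (this.mul h2).aestronglyMeasurable
  · refine Eventually.of_forall fun u _ => ?_
    rw [norm_mul, Real.norm_of_nonneg (by positivity), Real.norm_eq_abs]
    rcases eq_or_ne (Real.sin u) 0 with h0 | h0
    · have h3 := hC (φ + π / 2) u
      rw [h0, abs_zero, mul_zero] at h3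
      rw [le_antisymm h3 (abs_nonneg _), h0, abs_zero, Real.zero_rpow (by linarith),
        Real.zero_rpow (by linarith)]
      simp
    · have hpos : 0 < |Real.sin u| := abs_pos.2 h0
      calc |Real.sin u| ^ (-2 + s) * |Ω (u + (φ + π / 2)) - Ω (φ + π / 2)|
          ≤ |Real.sin u| ^ (-2 + s) * (C * |Real.sin u|) := by
            gcongr
            exact hC _ _
        _ = C * |Real.sin u| ^ (s - 1) := by
            rw [show s - 1 = -2 + s + 1 by ring, Real.rpow_add_one hpos.ne']
            ring
  · exact Eventually.of_forall fun u _ => by fun_prop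

/-! ### The weight `K Ω̃(φ) dφ` -/

/-- The constant in front of the integrals defining `A`, `B` and `𝓜`. -/
def Kc (s : ℝ) : ℝ := tauC s * (R1 s / R2 s) ^ (2 + s)

lemma Kc_pos {s : ℝ} (hs0 : 0 < s) (hs1 : s < 1) : 0 < Kc s := by
  have hπ := Real.pi_pos
  have hcos : 0 < Real.cos (s * π / 2) :=
    Real.cos_pos_of_mem_Ioo ⟨by nlinarith, by nlinarith⟩
  have hsin : 0 < Real.sin (s * π / 2) :=
    Real.sin_pos_of_pos_of_lt_pi (by positivity) (by nlinarith)
  have hG := Real.Gamma_pos_of_pos hs0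
  have hB : 0 < BetaR (1 / 2) ((3 + s) / 2) := by
    unfold BetaR
    have h1 := Real.Gamma_pos_of_pos (show (0 : ℝ) < 1 / 2 by norm_num)
    have h2 := Real.Gamma_pos_of_pos (show (0 : ℝ) < (3 + s) / 2 by linarith)
    have h3 := Real.Gamma_pos_of_pos (show (0 : ℝ) < 1 / 2 + (3 + s) / 2 by linarith)
    positivity
  unfold Kc tauC R1 R2 C1
  positivity

/-- The measure `K Ω̃(φ) dφ` on `(-π, π]`. -/
def muOm (s : ℝ) (Ω : ℝ → ℝ) : Measure ℝ :=
  (volume.restrict (Ioc (-π) π)).withDensity fun φ => ENNReal.ofReal (Kc s * Omt s Ω φ)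

lemma integral_muOm {s c : ℝ} (hs0 : 0 < s) (hs1 : s < 1) {Ω : ℝ → ℝ} (h : SatisfiesH Ω)
    (hc : 0 < c) (hlow : ∀ φ, c ≤ Omt s Ω φ) (f : ℝ → ℝ) :
    ∫ φ, f φ ∂(muOm s Ω) = Kc s * ∫ φ in (-π)..π, f φ * Omt s Ω φ := by
  have hO := (Omt_continuous hs0 hs1 h).measurable
  have hK := Kc_pos hs0 hs1
  unfold muOm
  rw [integral_withDensity_eq_integral_toReal_smul (by fun_prop)
    (Eventually.of_forall fun _ => ENNReal.ofReal_lt_top),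
    intervalIntegral.integral_of_le (by linarith [Real.pi_pos]), ← integral_const_mul]
  congr 1
  ext φ
  rw [ENNReal.toReal_ofReal (mul_nonneg hK.le (hc.le.trans (hlow φ))), smul_eq_mul]
  ring

/-- The hypotheses of the abstract setting hold for `K Ω̃(φ) dφ` and `p = cos²`: near the axes
use `|sin φ| ≤ |φ|` and `Ω̃ ≥ c`. -/
lemma weight_muOm {s c : ℝ} (hs0 : 0 < s) (hs1 : s < 1) {Ω : ℝ → ℝ} (h : SatisfiesH Ω)
    (hc : 0 < c) (hlow : ∀ φ, c ≤ Omt s Ω φ) :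
    Weight (muOm s Ω) (fun φ => Real.cos φ ^ 2) (Kc s * c) := by
  have hO := Omt_continuous hs0 hs1 h
  have hK := Kc_pos hs0 hs1
  have hfin : IsFiniteMeasure (muOm s Ω) := by
    refine isFiniteMeasure_withDensity_ofReal (Integrable.hasFiniteIntegral ?_)
    exact ((hO.const_smul (Kc s)).integrableOn_Icc (a := -π) (b := π)).mono_set
      Ioc_subset_Icc_self
  have hmass : ∀ (S : Set ℝ) (x ε : ℝ), 0 < ε → MeasurableSet S → Ioc x (x + ε) ⊆ S →
      Ioc x (x + ε) ⊆ Ioc (-π) π → Kc s * c * ε ≤ (muOm s Ω).real S := by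
    intro S x ε hε hS hxS hxπ
    rw [measureReal_def]
    refine (ENNReal.ofReal_le_iff_le_toReal (measure_ne_top _ _)).1 ?_
    refine le_trans ?_ (measure_mono hxS)
    rw [muOm, withDensity_apply _ measurableSet_Ioc, Measure.restrict_restrict measurableSet_Ioc,
      inter_eq_self_of_subset_left hxπ, ENNReal.ofReal_mul (by positivity)]
    calc ENNReal.ofReal (Kc s * c) * ENNReal.ofReal ε
        = ∫⁻ _ in Ioc x (x + ε), ENNReal.ofReal (Kc s * c) := by
          rw [setLIntegral_const, Real.volume_Ioc, add_sub_cancel_left]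
      _ ≤ _ := lintegral_mono fun φ =>
          ENNReal.ofReal_le_ofReal (mul_le_mul_of_nonneg_left (hlow φ) hK.le)
  have hπ := Real.pi_gt_three
  refine ⟨hfin, by fun_prop, fun φ => sq_nonneg _, fun φ => Real.cos_sq_le_one φ, by positivity,
    fun ε hε hε2 => ?_, fun ε hε hε2 => ?_⟩
  · refine hmass _ 0 ε hε (measurableSet_le (by fun_prop) measurable_const) (fun φ hφ => ?_)
      (fun φ hφ => ⟨by linarith [hφ.1], by linarith [hφ.2]⟩)
    have h1 := Real.sin_sq_le_sq (x := φ)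
    have h2 := Real.sin_sq_add_cos_sq φ
    simp only [mem_ofPred_eq]
    nlinarith [hφ.1, hφ.2]
  · refine hmass _ (π / 2) ε hε (measurableSet_le (by fun_prop) measurable_const)
      (fun φ hφ => ?_) (fun φ hφ => ⟨by linarith [hφ.1], by linarith [hφ.2]⟩)
    have h1 := Real.sin_sq_le_sq (x := φ - π / 2)
    rw [Real.sin_sub_pi_div_two, neg_sq] at h1
    simp only [mem_ofPred_eq]
    nlinarith [hφ.1, hφ.2]

section Bridge

variable {s c : ℝ} {Ω : ℝ → ℝ}

lemma Lf_cos (a b φ : ℝ) : Lf (fun φ => Real.cos φ ^ 2) (a ^ 2) (b ^ 2) φ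
    = a ^ 2 * Real.cos φ ^ 2 + b ^ 2 * Real.sin φ ^ 2 := by
  simp only [Lf]
  rw [Real.sin_sq]

lemma Acoef_eq (hs0 : 0 < s) (hs1 : s < 1) (h : SatisfiesH Ω) (hc : 0 < c)
    (hlow : ∀ φ, c ≤ Omt s Ω φ) (a b : ℝ) :
    Acoef s Ω a b
      = GA (s / 2) (muOm s Ω) (fun φ => Real.cos φ ^ 2) (a ^ 2) (b ^ 2) := by
  rw [GA, integral_muOm hs0 hs1 h hc hlow]
  simp only [Lf_cos, show -(s / 2) - 1 = -(2 + s) / 2 by ring]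
  rfl

lemma Bcoef_eq (hs0 : 0 < s) (hs1 : s < 1) (h : SatisfiesH Ω) (hc : 0 < c)
    (hlow : ∀ φ, c ≤ Omt s Ω φ) (a b : ℝ) :
    Bcoef s Ω a b
      = GB (s / 2) (muOm s Ω) (fun φ => Real.cos φ ^ 2) (a ^ 2) (b ^ 2) := by
  rw [GB, integral_muOm hs0 hs1 h hc hlow]
  simp only [Lf_cos, show -(s / 2) - 1 = -(2 + s) / 2 by ring, ← Real.sin_sq]
  rfl

lemma calE_eq (hs0 : 0 < s) (hs1 : s < 1) (h : SatisfiesH Ω) (hc : 0 < c)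
    (hlow : ∀ φ, c ≤ Omt s Ω φ) (a b : ℝ) :
    calE s Ω a b
      = En (s / 2) (muOm s Ω) (fun φ => Real.cos φ ^ 2) (a ^ 2) (b ^ 2) := by
  rw [En, GM, integral_muOm hs0 hs1 h hc hlow]
  simp only [Lf_cos, show -(s / 2) = -s / 2 by ring]
  rfl

end Bridge

/-- if `Ω̃ ≥ c > 0`, there is a unique `(a_∞, b_∞) ∈ (0,∞)²` with
`A(a_∞,b_∞) = B(a_∞,b_∞) = 1`, and every global-in-time positive solution of the ODE
system converges to it, with exponential convergence of the energy `ℰ`. -/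
theorem statement8 (s : ℝ) (hs0 : 0 < s) (hs1 : s < 1) (Ω : ℝ → ℝ) (hΩ : SatisfiesH Ω)
    (c : ℝ) (hc : 0 < c) (hlow : ∀ φ, c ≤ Omt s Ω φ) :
    (∃! p : ℝ × ℝ, (0 < p.1 ∧ 0 < p.2) ∧ Acoef s Ω p.1 p.2 = 1 ∧ Bcoef s Ω p.1 p.2 = 1) ∧
    (∀ p : ℝ × ℝ, ((0 < p.1 ∧ 0 < p.2) ∧ Acoef s Ω p.1 p.2 = 1 ∧ Bcoef s Ω p.1 p.2 = 1) →
      ∀ a b : ℝ → ℝ,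
        (∀ t ∈ Set.Ici (0 : ℝ), 0 < a t) → (∀ t ∈ Set.Ici (0 : ℝ), 0 < b t) →
        ContDiffOn ℝ 1 a (Set.Ici 0) → ContDiffOn ℝ 1 b (Set.Ici 0) →
        (∀ t ∈ Set.Ici (0 : ℝ),
          HasDerivWithinAt a (2 * (Acoef s Ω (a t) (b t) - 1) * a t) (Set.Ici 0) t) →
        (∀ t ∈ Set.Ici (0 : ℝ),
          HasDerivWithinAt b (2 * (Bcoef s Ω (a t) (b t) - 1) * b t) (Set.Ici 0) t) →
        (∃ C lam : ℝ, 0 < C ∧ 0 < lam ∧ ∀ t : ℝ, 0 ≤ t →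
          calE s Ω (a t) (b t) - calE s Ω p.1 p.2 ≤ C * Real.exp (-lam * t)) ∧
        Tendsto (fun t => (a t, b t)) atTop (𝓝 p)) := by
  have hW := weight_muOm hs0 hs1 hΩ hc hlow
  have hσ : 0 < s / 2 := by positivity
  have eA := Acoef_eq hs0 hs1 hΩ hc hlow
  have eB := Bcoef_eq hs0 hs1 hΩ hc hlow
  have eE := calE_eq hs0 hs1 hΩ hc hlow
  refine ⟨?_, ?_⟩
  · obtain ⟨u, v, hu, hv, hA, hB⟩ := hW.exists_crit hσ
    refine ⟨(√u, √v), ⟨⟨Real.sqrt_pos.2 hu, Real.sqrt_pos.2 hv⟩, ?_, ?_⟩, ?_⟩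
    · rw [eA, Real.sq_sqrt hu.le, Real.sq_sqrt hv.le, hA]
    · rw [eB, Real.sq_sqrt hu.le, Real.sq_sqrt hv.le, hB]
    · rintro ⟨a, b⟩ ⟨⟨ha, hb⟩, hA', hB'⟩
      simp only at ha hb hA' hB'
      rw [eA] at hA'
      rw [eB] at hB'
      obtain ⟨h1, h2⟩ := hW.crit_unique hσ (pow_pos ha 2) (pow_pos hb 2) hu hv hA' hB' hA hB
      rw [← h1, ← h2, Real.sqrt_sq ha.le, Real.sqrt_sq hb.le]
  · rintro ⟨p, q⟩ ⟨⟨hp, hq⟩, hA, hB⟩ a b ha hb - - ha' hb'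
    simp only at hp hq hA hB
    rw [eA] at hA
    rw [eB] at hB
    obtain ⟨⟨C, lam, hC, hlam, H⟩, hu, hv⟩ := hW.flow hσ (pow_pos hp 2) (pow_pos hq 2) hA hB
      (u := fun t => a t ^ 2) (v := fun t => b t ^ 2)
      (fun t ht => pow_pos (ha t ht) 2) (fun t ht => pow_pos (hb t ht) 2)
      (fun t ht => ((ha' t ht).pow 2).congr_deriv (by rw [eA]; push_cast; ring))
      (fun t ht => ((hb' t ht).pow 2).congr_deriv (by rw [eB]; push_cast; ring))
    refine ⟨⟨C, lam, hC, hlam, fun t ht => ?_⟩, ?_⟩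
    · rw [eE, eE]
      exact H t ht
    · have hu' := hu.sqrt
      have hv' := hv.sqrt
      rw [Real.sqrt_sq hp.le] at hu'
      rw [Real.sqrt_sq hq.le] at hv'
      refine Tendsto.prodMk_nhds (hu'.congr' ?_) (hv'.congr' ?_)
      · filter_upwards [eventually_ge_atTop 0] with t ht
        exact Real.sqrt_sq (ha t ht).le
      · filter_upwards [eventually_ge_atTop 0] with t ht
        exact Real.sqrt_sq (hb t ht).le

end Aniso
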